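/- arXiv:2512.15189 — 2 statements merged into one kernel-verified Lean document; each statement's English description precedes it below -/
import Mathlib

section
/- (Per-iteration contraction of asynchronous DPBM.) Let ι be a finite nonempty index type with a distinguished element i₀, and let ŵ : ι → ℝ satisfy ŵ_j ≥ 0 for all j and Σ_j ŵ_j = 1. Let γ > 0 and β ≥ 0 with γ·β ≤ ŵ_{i₀}. Let f, h, m : ℝ^d → ℝ with m and h convex, set φ := f + h, fix x̄ ∈ ℝ^d, and assume the sandwich bounds m(y) ≤ f(y) ≤ m(y) + (β/2)‖y − x̄‖² for all y. Let z : ι → ℝ^d with z_{i₀} = x̄, and let x* : ι → ℝ^d. Suppose x⁺, g⁺ ∈ ℝ^d satisfy: g⁺ is a subgradient of m + h at x⁺ and x⁺ = Σ_j ŵ_j z_j − γ g⁺. Suppose g* ∈ ℝ^d is a subgradient of φ at x*_{i₀} and x*_{i₀} = Σ_j ŵ_j x*_j − γ g*. Then ‖x⁺ − x*_{i₀}‖² ≤ Σ_j ŵ_j ‖z_j − x*_j‖² − 2γ( φ(x⁺) − φ(x*_{i₀}) − ⟪g*, x⁺ − x*_{i₀}⟫ ). -/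
open scoped RealInnerProductSpace

/-!
Put `uⱼ = zⱼ - x*ⱼ` and `D = x⁺ - x* i₀`. Averaging gives
`‖D‖² + ∑ wⱼ ‖uⱼ - D‖² = ∑ wⱼ ‖uⱼ‖² - 2 ⟪∑ wⱼ uⱼ - D, D⟫`, and the equations for `x⁺` and `x* i₀`
turn `∑ wⱼ uⱼ - D` into `γ (g⁺ - g*)`. A subgradient of the model is an `ε`-subgradient of `φ` with
`ε = β / 2 * ‖x⁺ - x̄‖²`, which bounds `⟪g⁺, D⟫` from below by `φ x⁺ - φ (x* i₀) - ε`. The error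
`2 γ ε = γ β ‖x⁺ - x̄‖²` is absorbed by the `i₀` term of the sum on the left, because
`u i₀ - D = x̄ - x⁺` and `γ β ≤ w i₀`.
-/

section InnerProductSpace

variable {E : Type*} [NormedAddCommGroup E] [InnerProductSpace ℝ E]

/-- `g` is an `ε`-subgradient of `φ` at `x`. No sign is imposed on `ε`, and `ε = 0` gives ordinary
subgradients. -/
def IsEpsSubgradientAt (ε : ℝ) (φ : E → ℝ) (g x : E) : Prop :=
  ∀ y, φ x + ⟪g, y - x⟫ - ε ≤ φ y

lemma isEpsSubgradientAt_of_minorant {φ ψ : E → ℝ} {g x : E} {ε : ℝ}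
    (hg : ∀ y, ψ x + ⟪g, y - x⟫ ≤ ψ y) (hψφ : ∀ y, ψ y ≤ φ y) (hx : φ x ≤ ψ x + ε) :
    IsEpsSubgradientAt ε φ g x :=
  fun y ↦ by linarith [hg y, hψφ y]

lemma IsEpsSubgradientAt.sub_sub_le_inner {φ : E → ℝ} {g x : E} {ε : ℝ}
    (hg : IsEpsSubgradientAt ε φ g x) (y : E) : φ x - φ y - ε ≤ ⟪g, x - y⟫ := by
  have hgy := hg y
  rw [← neg_sub x y, inner_neg_right] at hgy
  linarith

variable {ι : Type*} {s : Finset ι} {w : ι → ℝ}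

lemma sum_mul_norm_sub_sq (s : Finset ι) (w : ι → ℝ) (u : ι → E) (a : E) :
    ∑ j ∈ s, w j * ‖u j - a‖ ^ 2 =
      ∑ j ∈ s, w j * ‖u j‖ ^ 2 - 2 * ⟪∑ j ∈ s, w j • u j, a⟫ + (∑ j ∈ s, w j) * ‖a‖ ^ 2 := by
  rw [sum_inner, Finset.mul_sum, Finset.sum_mul, ← Finset.sum_sub_distrib,
    ← Finset.sum_add_distrib]
  refine Finset.sum_congr rfl fun j _ ↦ ?_
  rw [norm_sub_sq_real, real_inner_smul_left]
  ring

lemma norm_sub_sq_add_sum_eq_of_averaged_steps (hw : ∑ j ∈ s, w j = 1) {γ : ℝ} {z z' : ι → E}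
    {x x' g g' : E} (hx : x = ∑ j ∈ s, w j • z j - γ • g)
    (hx' : x' = ∑ j ∈ s, w j • z' j - γ • g') :
    ‖x - x'‖ ^ 2 + ∑ j ∈ s, w j * ‖z j - z' j - (x - x')‖ ^ 2 =
      ∑ j ∈ s, w j * ‖z j - z' j‖ ^ 2 - 2 * γ * ⟪g - g', x - x'⟫ := by
  have hmean : ∑ j ∈ s, w j • (z j - z' j) = (x - x') + γ • (g - g') := by
    simp only [smul_sub, Finset.sum_sub_distrib]
    rw [hx, hx']
    abel
  rw [sum_mul_norm_sub_sq, hw, hmean, inner_add_left, real_inner_smul_left,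
    real_inner_self_eq_norm_sq]
  ring

lemma IsEpsSubgradientAt.norm_sub_sq_add_sum_le (hw : ∑ j ∈ s, w j = 1) {γ ε : ℝ} (hγ : 0 ≤ γ)
    {φ : E → ℝ} {z z' : ι → E} {x x' g g' : E} (hg : IsEpsSubgradientAt ε φ g x)
    (hx : x = ∑ j ∈ s, w j • z j - γ • g) (hx' : x' = ∑ j ∈ s, w j • z' j - γ • g') :
    ‖x - x'‖ ^ 2 + ∑ j ∈ s, w j * ‖z j - z' j - (x - x')‖ ^ 2 ≤
      ∑ j ∈ s, w j * ‖z j - z' j‖ ^ 2 - 2 * γ * (φ x - φ x' - ⟪g', x - x'⟫ - ε) := by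
  have hgap : φ x - φ x' - ⟪g', x - x'⟫ - ε ≤ ⟪g - g', x - x'⟫ := by
    rw [inner_sub_left]
    linarith [hg.sub_sub_le_inner x']
  rw [norm_sub_sq_add_sum_eq_of_averaged_steps hw hx hx']
  gcongr

theorem stmt_4_general [Fintype ι] (i₀ : ι) (hw : ∀ j, 0 ≤ w j) (hw1 : ∑ j, w j = 1)
    {γ β : ℝ} (hγ : 0 ≤ γ) (hγβ : γ * β ≤ w i₀) {φ ψ : E → ℝ} (hψφ : ∀ y, ψ y ≤ φ y)
    {z xstar : ι → E} {xp gp gs : E} (hφψ : φ xp ≤ ψ xp + β / 2 * ‖xp - z i₀‖ ^ 2)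
    (hgp : ∀ y, ψ xp + ⟪gp, y - xp⟫ ≤ ψ y) (hxp : xp = ∑ j, w j • z j - γ • gp)
    (hxs : xstar i₀ = ∑ j, w j • xstar j - γ • gs) :
    ‖xp - xstar i₀‖ ^ 2 ≤ ∑ j, w j * ‖z j - xstar j‖ ^ 2
      - 2 * γ * (φ xp - φ (xstar i₀) - ⟪gs, xp - xstar i₀⟫) := by
  have hstep := (isEpsSubgradientAt_of_minorant hgp hψφ hφψ).norm_sub_sq_add_sum_le hw1 hγ hxp hxs
  have habsorb : γ * β * ‖xp - z i₀‖ ^ 2 ≤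
      ∑ j, w j * ‖z j - xstar j - (xp - xstar i₀)‖ ^ 2 :=
    calc γ * β * ‖xp - z i₀‖ ^ 2 ≤ w i₀ * ‖xp - z i₀‖ ^ 2 := by gcongr
      _ = w i₀ * ‖z i₀ - xstar i₀ - (xp - xstar i₀)‖ ^ 2 := by
        rw [sub_sub_sub_cancel_right, norm_sub_rev]
      _ ≤ ∑ j, w j * ‖z j - xstar j - (xp - xstar i₀)‖ ^ 2 :=
        Finset.single_le_sum (f := fun j ↦ w j * ‖z j - xstar j - (xp - xstar i₀)‖ ^ 2)
          (fun j _ ↦ mul_nonneg (hw j) (sq_nonneg _)) (Finset.mem_univ i₀)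
  linarith

end InnerProductSpace

/-- Per-iteration contraction of asynchronous DPBM. -/
theorem stmt_4 {d : ℕ} (hd : 1 ≤ d)
    {ι : Type*} [Fintype ι] [Nonempty ι] (i₀ : ι)
    (w : ι → ℝ) (hw : ∀ j, 0 ≤ w j) (hw1 : ∑ j, w j = 1)
    (γ β : ℝ) (hγ : 0 < γ) (hβ : 0 ≤ β) (hγβ : γ * β ≤ w i₀)
    (f h m : EuclideanSpace ℝ (Fin d) → ℝ)
    (hmconv : ConvexOn ℝ Set.univ m) (hhconv : ConvexOn ℝ Set.univ h)
    (φ : EuclideanSpace ℝ (Fin d) → ℝ) (hφ : ∀ y, φ y = f y + h y)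
    (xb : EuclideanSpace ℝ (Fin d))
    (hsand₁ : ∀ y, m y ≤ f y)
    (hsand₂ : ∀ y, f y ≤ m y + β / 2 * ‖y - xb‖ ^ 2)
    (z : ι → EuclideanSpace ℝ (Fin d)) (hz : z i₀ = xb)
    (xstar : ι → EuclideanSpace ℝ (Fin d))
    (xp gp : EuclideanSpace ℝ (Fin d))
    (hgp : ∀ y, m y + h y ≥ m xp + h xp + ⟪gp, y - xp⟫)
    (hxp : xp = ∑ j, w j • z j - γ • gp)
    (gs : EuclideanSpace ℝ (Fin d))
    (hgs : ∀ y, φ y ≥ φ (xstar i₀) + ⟪gs, y - xstar i₀⟫)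
    (hxs : xstar i₀ = ∑ j, w j • xstar j - γ • gs) :
    ‖xp - xstar i₀‖ ^ 2 ≤ ∑ j, w j * ‖z j - xstar j‖ ^ 2
      - 2 * γ * (φ xp - φ (xstar i₀) - ⟪gs, xp - xstar i₀⟫) := by
  subst hz
  exact stmt_4_general (ψ := fun y ↦ m y + h y) i₀ hw hw1 hγ.le hγβ
    (fun y ↦ by linarith [hφ y, hsand₁ y]) (by linarith [hφ xp, hsand₂ xp]) hgp hxp hxs
end

section
/- (Theorem 1, part 1, convergence without strong convexity.) Consider the asynchronous DPBM setup under partial asynchrony with parameters B, D ∈ ℕ. Then the joint iterate sequence (x_1^k, …, x_n^k) converges, as k → ∞, to a point x̃ ∈ (ℝ^d)^n that is a global minimizer of the penalized objective Φ. -/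
open scoped RealInnerProductSpace

/-!
Let `y` minimize the penalized objective. A proximal step of node `i` on a convex minorant satisfies
the three-point inequality, which combined with the optimality of `y` gives
`δᵢ ‖xᵢᵏ⁺¹ - xᵢᵏ‖² + ‖xᵢᵏ⁺¹ - yᵢ‖² ≤ ∑ⱼ pᵢⱼ ‖xⱼ^{s_ijᵏ} - yⱼ‖²` with `δᵢ > 0`, where `(pᵢⱼ)` is
row-stochastic with positive diagonal; this is where the step-size bound enters.

Hence the maximum of the squared distances over all nodes and a window of `D + 1` times does not
increase. If a node were a fixed amount below this maximum infinitely often, it would each time pull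
all nodes below the maximum by a fixed fraction of that amount within boundedly many steps, since
positive weights connect the nodes and updates recur. So all squared distances converge to one
common limit `V`, and then `‖xᵢᵏ⁺¹ - xᵢᵏ‖ → 0`. As delays are bounded, every cluster point satisfies
the optimality condition. Taking `y` to be a cluster point forces `V = 0`.
-/

section

open Filter Topology

/-- A partially asynchronous schedule in the sense of Bertsekas and Tsitsiklis: node `i` updates at
the times `k` in `K i`, reading the value of node `j` from time `s i j k`. Every node updates at
least once in any `B + 1` consecutive times, and delays are at most `D`. -/
structure PartiallyAsynchronous {ι : Type*} (K : ι → Set ℕ) (s : ι → ι → ℕ → ℕ) (B D : ℕ) :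
    Prop where
  self_delay : ∀ i, ∀ k ∈ K i, s i i k = k
  delay_le : ∀ i j, ∀ k ∈ K i, s i j k ≤ k
  le_delay : ∀ i j, ∀ k ∈ K i, k - D ≤ s i j k
  exists_update : ∀ i, ∀ k : ℕ, ∃ l ∈ K i, k ≤ l ∧ l ≤ k + B

/-- Asynchronous sub-averaging of the real values `u k i` held by node `i` at time `k`: at an update
time the new value is at most the `P`-weighted average of the values read, where `P` is
row-stochastic with positive diagonal, and at other times the value does not increase. -/
structure AsyncSubaveraging {ι : Type*} [Fintype ι] (P : Matrix ι ι ℝ) (K : ι → Set ℕ)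
    (s : ι → ι → ℕ → ℕ) (u : ℕ → ι → ℝ) : Prop where
  nonneg : ∀ i j, 0 ≤ P i j
  row_sum : ∀ i, ∑ j, P i j = 1
  diag_pos : ∀ i, 0 < P i i
  update_le : ∀ i, ∀ k ∈ K i, u (k + 1) i ≤ ∑ j, P i j * u (s i j k) j
  idle_le : ∀ i, ∀ k ∉ K i, u (k + 1) i ≤ u k i

/-- The largest value of `u` over all nodes and the `D + 1` consecutive times starting at `k`. It is
the Lyapunov function of asynchronous averaging with delays at most `D`. -/
noncomputable def windowMax {ι : Type*} (u : ℕ → ι → ℝ) (D k : ℕ) : ℝ :=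
  ⨆ p : Fin (D + 1) × ι, u (k + p.1) p.2

theorem le_windowMax {ι : Type*} [Finite ι] (u : ℕ → ι → ℝ) {D k l : ℕ} (hkl : k ≤ l)
    (hlD : l ≤ k + D) (i : ι) : u l i ≤ windowMax u D k := by
  have h := le_ciSup (Set.finite_range fun p : Fin (D + 1) × ι => u (k + p.1) p.2).bddAbove
    (⟨l - k, by omega⟩, i)
  simpa only [windowMax, Nat.add_sub_of_le hkl] using h

theorem windowMax_le {ι : Type*} [Nonempty ι] {u : ℕ → ι → ℝ} {D k : ℕ} {M : ℝ}
    (hM : ∀ l, k ≤ l → l ≤ k + D → ∀ i, u l i ≤ M) : windowMax u D k ≤ M :=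
  ciSup_le fun p => hM _ (by omega) (by omega) p.2

namespace AsyncSubaveraging

variable {ι : Type*} [Fintype ι] {P : Matrix ι ι ℝ} {K : ι → Set ℕ} {s : ι → ι → ℕ → ℕ}
  {u : ℕ → ι → ℝ} {B D : ℕ}

theorem diag_le_one (hu : AsyncSubaveraging P K s u) (i : ι) : P i i ≤ 1 :=
  hu.row_sum i ▸ Finset.single_le_sum (fun j _ => hu.nonneg i j) (Finset.mem_univ i)

theorem mul_gap_le (hu : AsyncSubaveraging P K s u) {i : ι} {k : ℕ} (hk : k ∈ K i) {M : ℝ}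
    (hM : ∀ j, u (s i j k) j ≤ M) (j : ι) :
    P i j * (M - u (s i j k) j) ≤ M - u (k + 1) i :=
  calc P i j * (M - u (s i j k) j)
      ≤ ∑ l, P i l * (M - u (s i l k) l) :=
        Finset.single_le_sum (f := fun l => P i l * (M - u (s i l k) l))
          (fun l _ => mul_nonneg (hu.nonneg i l) (sub_nonneg.2 (hM l))) (Finset.mem_univ j)
    _ = M - ∑ l, P i l * u (s i l k) l := by
        simp only [mul_sub, Finset.sum_sub_distrib, ← Finset.sum_mul, hu.row_sum, one_mul]
    _ ≤ M - u (k + 1) i := sub_le_sub_left (hu.update_le i k hk) M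

theorem diag_mul_gap_le (hu : AsyncSubaveraging P K s u) (hs : PartiallyAsynchronous K s B D)
    {k t : ℕ} {M : ℝ} (hM : ∀ l, k ≤ l → l ≤ t → ∀ j, u l j ≤ M) (ht : k + D ≤ t) (i : ι) :
    P i i * (M - u t i) ≤ M - u (t + 1) i := by
  by_cases hK : t ∈ K i
  · have hread : ∀ j, u (s i j t) j ≤ M := fun j =>
      hM _ (by have := hs.le_delay i j t hK; omega) (hs.delay_le i j t hK) j
    simpa only [hs.self_delay i t hK] using hu.mul_gap_le hK hread i
  · have hgap : 0 ≤ M - u t i := sub_nonneg.2 (hM t (by omega) le_rfl i)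
    linarith [mul_le_of_le_one_left hgap (hu.diag_le_one i), hu.idle_le i t hK]

theorem le_windowMax_of_le (hu : AsyncSubaveraging P K s u) (hs : PartiallyAsynchronous K s B D)
    {k l : ℕ} (hkl : k ≤ l) (i : ι) : u l i ≤ windowMax u D k := by
  induction l using Nat.strong_induction_on generalizing i with
  | _ l ih =>
    rcases le_or_gt l (k + D) with hlD | hlD
    · exact le_windowMax u hkl hlD i
    · obtain ⟨t, rfl⟩ : ∃ t, l = t + 1 := ⟨l - 1, by omega⟩
      have hstep := hu.diag_mul_gap_le hs (M := windowMax u D k)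
        (fun l hkl hlt j => ih l (by omega) hkl j) (by omega : k + D ≤ t) i
      have hgap := mul_nonneg (hu.diag_pos i).le (sub_nonneg.2 (ih t (by omega) (by omega) i))
      linarith

theorem antitone_windowMax [Nonempty ι] (hu : AsyncSubaveraging P K s u)
    (hs : PartiallyAsynchronous K s B D) : Antitone (windowMax u D) := fun _ _ hkl =>
  windowMax_le fun _ hl _ i => hu.le_windowMax_of_le hs (hkl.trans hl) i

theorem pow_mul_gap_le (hu : AsyncSubaveraging P K s u) (hs : PartiallyAsynchronous K s B D)
    {ρ : ℝ} (hρ : 0 ≤ ρ) (hρP : ∀ i, ρ ≤ P i i) {k t : ℕ} {M : ℝ}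
    (hM : ∀ l, k ≤ l → ∀ i, u l i ≤ M) (ht : k + D ≤ t) (i : ι) (r : ℕ) :
    ρ ^ r * (M - u t i) ≤ M - u (t + r) i := by
  induction r with
  | zero => simp
  | succ r ih =>
    have hgap : 0 ≤ M - u (t + r) i := sub_nonneg.2 (hM _ (by omega) i)
    calc ρ ^ (r + 1) * (M - u t i)
        = ρ * (ρ ^ r * (M - u t i)) := by ring
      _ ≤ ρ * (M - u (t + r) i) := mul_le_mul_of_nonneg_left ih hρ
      _ ≤ P i i * (M - u (t + r) i) := mul_le_mul_of_nonneg_right (hρP i) hgap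
      _ ≤ M - u (t + (r + 1)) i :=
        hu.diag_mul_gap_le hs (fun l hkl _ => hM l hkl) (by omega) i

theorem exists_mul_pow_mul_gap_le (hu : AsyncSubaveraging P K s u)
    (hs : PartiallyAsynchronous K s B D) {ρ : ℝ} (hρ : 0 < ρ) (hρP : ∀ i, ρ ≤ P i i) {i j : ι}
    (hij : Relation.ReflTransGen (fun i j => 0 < P j i) i j) :
    ∃ C > 0, ∃ N : ℕ, ∀ k M, (∀ l, k ≤ l → ∀ i, u l i ≤ M) → ∀ t, k + D ≤ t → ∀ r, N ≤ r →
      C * ρ ^ r * (M - u t i) ≤ M - u (t + r) j := by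
  induction hij with
  | refl =>
    refine ⟨1, one_pos, 0, fun k M hM t ht r _ => ?_⟩
    rw [one_mul]
    exact hu.pow_mul_gap_le hs hρ.le hρP hM ht i r
  | @tail p j _ hpj ih =>
    obtain ⟨C, hC, N, hN⟩ := ih
    refine ⟨P j p * C, mul_pos hpj hC, N + D + B + 1, fun k M hM t ht r hr => ?_⟩
    -- `j` reads the gap of `p` at the update time `τ`, then keeps it until `t + r`.
    obtain ⟨τ, hτ, hτ_ge, hτ_le⟩ := hs.exists_update j (t + N + D)
    have hread_le := hs.delay_le j p τ hτ
    have hread_ge := hs.le_delay j p τ hτ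
    obtain ⟨a, ha⟩ : ∃ a, s j p τ = t + a := ⟨s j p τ - t, by omega⟩
    obtain ⟨b, hb⟩ : ∃ b, t + r = τ + 1 + b := ⟨t + r - (τ + 1), by omega⟩
    have hgap : 0 ≤ M - u t i := sub_nonneg.2 (hM t (by omega) i)
    have hρ1 : ρ ≤ 1 := (hρP i).trans (hu.diag_le_one i)
    have hpow : ρ ^ r ≤ ρ ^ b * ρ ^ a := by
      rw [← pow_add]
      exact pow_le_pow_of_le_one hρ.le hρ1 (by omega)
    calc P j p * C * ρ ^ r * (M - u t i)
        ≤ P j p * C * (ρ ^ b * ρ ^ a) * (M - u t i) := by gcongr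
      _ = ρ ^ b * (P j p * (C * ρ ^ a * (M - u t i))) := by ring
      _ ≤ ρ ^ b * (P j p * (M - u (s j p τ) p)) := by
        rw [ha]
        gcongr
        exact hN k M hM t ht a (by omega)
      _ ≤ ρ ^ b * (M - u (τ + 1) j) := by
        gcongr
        exact hu.mul_gap_le hτ
          (fun l => hM _ (by have := hs.le_delay j l τ hτ; omega) l) p
      _ ≤ M - u (t + r) j := by
        rw [hb]
        exact hu.pow_mul_gap_le hs hρ.le hρP hM (by omega) j b

theorem exists_windowMax_add_mul_gap_le [Nonempty ι] (hu : AsyncSubaveraging P K s u)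
    (hs : PartiallyAsynchronous K s B D)
    (hP : ∀ i j, Relation.ReflTransGen (fun i j => 0 < P j i) i j) (i : ι) :
    ∃ κ > 0, ∃ N : ℕ, ∀ k,
      windowMax u D (k + N) + κ * (windowMax u D k - u (k + D) i) ≤ windowMax u D k := by
  obtain ⟨i₀, hi₀⟩ := Finite.exists_min fun i => P i i
  have hρ := hu.diag_pos i₀
  choose C hC N hN using fun j => hu.exists_mul_pow_mul_gap_le hs hρ hi₀ (hP i j)
  obtain ⟨jC, hjC⟩ := Finite.exists_min C
  obtain ⟨jN, hjN⟩ := Finite.exists_max N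
  refine ⟨C jC * P i₀ i₀ ^ (N jN + D), mul_pos (hC jC) (pow_pos hρ _), D + N jN, fun k => ?_⟩
  have hbound : ∀ l, k ≤ l → ∀ j, u l j ≤ windowMax u D k := fun l hl j =>
    hu.le_windowMax_of_le hs hl j
  have hgap : 0 ≤ windowMax u D k - u (k + D) i := sub_nonneg.2 (hbound _ (by omega) i)
  rw [← le_sub_iff_add_le]
  refine windowMax_le fun l hl_ge hl_le j => ?_
  obtain ⟨r, rfl⟩ : ∃ r, l = k + D + r := ⟨l - (k + D), by omega⟩
  have hspread : C j * P i₀ i₀ ^ r * (windowMax u D k - u (k + D) i) ≤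
      windowMax u D k - u (k + D + r) j :=
    hN j k _ hbound _ le_rfl r ((hjN j).trans (by omega))
  have hconst : C jC * P i₀ i₀ ^ (N jN + D) ≤ C j * P i₀ i₀ ^ r :=
    mul_le_mul (hjC j) (pow_le_pow_of_le_one hρ.le (hu.diag_le_one i₀) (by omega))
      (pow_nonneg hρ.le _) (hC j).le
  linarith [mul_le_mul_of_nonneg_right hconst hgap]

theorem exists_tendsto [Nonempty ι] (hu : AsyncSubaveraging P K s u)
    (hs : PartiallyAsynchronous K s B D)
    (hP : ∀ i j, Relation.ReflTransGen (fun i j => 0 < P j i) i j) {b : ℝ}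
    (hb : ∀ k i, b ≤ u k i) : ∃ V, ∀ i, Tendsto (fun k => u k i) atTop (𝓝 V) := by
  have hbdd : BddBelow (Set.range (windowMax u D)) := by
    refine ⟨b, ?_⟩
    rintro _ ⟨k, rfl⟩
    exact (hb k (Classical.arbitrary ι)).trans (le_windowMax u le_rfl (by omega) _)
  have hmax := tendsto_atTop_ciInf (hu.antitone_windowMax hs) hbdd
  refine ⟨⨅ k, windowMax u D k, fun i => (tendsto_add_atTop_iff_nat D).1 ?_⟩
  obtain ⟨κ, hκ, N, hN⟩ := hu.exists_windowMax_add_mul_gap_le hs hP i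
  have hlower : Tendsto (fun k => windowMax u D k - (windowMax u D k - windowMax u D (k + N)) / κ)
      atTop (𝓝 (⨅ k, windowMax u D k)) := by
    simpa only [Function.comp_apply, sub_self, zero_div, sub_zero] using
      hmax.sub ((hmax.sub (hmax.comp (tendsto_add_atTop_nat N))).div_const κ)
  refine tendsto_of_tendsto_of_tendsto_of_le_of_le hlower hmax (fun k => ?_)
    fun k => hu.le_windowMax_of_le hs (by omega) i
  rw [sub_le_comm, le_div_iff₀' hκ]
  linarith [hN k]

end AsyncSubaveraging

theorem PartiallyAsynchronous.tendsto_delay {ι : Type*} {K : ι → Set ℕ} {s : ι → ι → ℕ → ℕ}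
    {B D : ℕ} (hs : PartiallyAsynchronous K s B D) (i j : ι) :
    Tendsto (s i j) (atTop ⊓ 𝓟 (K i)) atTop := by
  refine tendsto_atTop_mono' _ ?_ ((tendsto_sub_atTop_nat D).mono_left inf_le_left)
  filter_upwards [mem_inf_of_right (mem_principal_self (K i))] with k hk using hs.le_delay i j k hk

theorem tendsto_zero_of_add_le_average {ι : Type*} [Fintype ι] {p : ι → ℝ} (hp : ∑ j, p j = 1)
    {S : Set ℕ} {σ : ι → ℕ → ℕ} (hσ : ∀ j, Tendsto (σ j) (atTop ⊓ 𝓟 S) atTop) {u : ℕ → ι → ℝ}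
    {V : ℝ} (hu : ∀ j, Tendsto (fun k => u k j) atTop (𝓝 V)) {e : ℕ → ℝ} (he : ∀ k, 0 ≤ e k)
    (i : ι) (hupdate : ∀ k ∈ S, e k + u (k + 1) i ≤ ∑ j, p j * u (σ j k) j)
    (hidle : ∀ k ∉ S, e k = 0) : Tendsto e atTop (𝓝 0) := by
  have hupper : Tendsto (fun k => ∑ j, p j * u (σ j k) j - u (k + 1) i) (atTop ⊓ 𝓟 S) (𝓝 0) := by
    have havg := tendsto_finsetSum Finset.univ fun j _ => ((hu j).comp (hσ j)).const_mul (p j)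
    have hsucc := ((tendsto_add_atTop_iff_nat 1).2 (hu i)).mono_left
      (inf_le_left : atTop ⊓ 𝓟 S ≤ atTop)
    simpa only [← Finset.sum_mul, hp, one_mul, sub_self, Function.comp_apply] using havg.sub hsucc
  have hupdating : Tendsto e (atTop ⊓ 𝓟 S) (𝓝 0) := by
    refine tendsto_of_tendsto_of_tendsto_of_le_of_le' tendsto_const_nhds hupper
      (Eventually.of_forall he) ?_
    filter_upwards [mem_inf_of_right (mem_principal_self S)] with k hk
    exact le_sub_right_of_add_le (hupdate k hk)
  have hidling : Tendsto e (atTop ⊓ 𝓟 Sᶜ) (𝓝 0) := by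
    refine tendsto_const_nhds.congr' ?_
    filter_upwards [mem_inf_of_right (mem_principal_self Sᶜ)] with k hk using (hidle k hk).symm
  simpa only [← inf_sup_left, sup_principal, Set.union_compl_self, principal_univ, inf_top_eq] using
    hupdating.sup hidling

theorem tendsto_comp_of_bounded_offset {E : Type*} [PseudoMetricSpace E] {X : ℕ → E}
    (hX : Tendsto (fun k => dist (X k) (X (k + 1))) atTop (𝓝 0)) {α : Type*} {l : Filter α}
    {ψ τ : α → ℕ} (hψ : Tendsto ψ l atTop) {N : ℕ} (hψτ : ∀ k, ψ k ≤ τ k + N)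
    (hτψ : ∀ k, τ k ≤ ψ k + N) {y : E} (hy : Tendsto (fun k => X (ψ k)) l (𝓝 y)) :
    Tendsto (fun k => X (τ k)) l (𝓝 y) := by
  have hmin : Tendsto (fun k => min (ψ k) (τ k)) l atTop :=
    tendsto_atTop_mono (fun k => le_min tsub_le_self (tsub_le_iff_right.2 (hψτ k)))
      ((tendsto_sub_atTop_nat N).comp hψ)
  have hsum : Tendsto (fun k => ∑ r ∈ Finset.range N, dist (X (min (ψ k) (τ k) + r))
      (X (min (ψ k) (τ k) + r + 1))) l (𝓝 0) := by
    simpa using tendsto_finsetSum (Finset.range N) fun r _ =>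
      ((tendsto_add_atTop_iff_nat r).2 hX).comp hmin
  have hshort : ∀ a r : ℕ, r ≤ N →
      dist (X a) (X (a + r)) ≤ ∑ r ∈ Finset.range N, dist (X (a + r)) (X (a + r + 1)) :=
    fun a r hr => (dist_le_range_sum_dist (fun r => X (a + r)) r).trans
      (Finset.sum_le_sum_of_subset_of_nonneg (Finset.range_mono hr) fun _ _ _ => dist_nonneg)
  refine (tendsto_iff_of_dist (squeeze_zero (fun _ => dist_nonneg) (fun k => ?_) hsum)).1 hy
  rcases le_total (ψ k) (τ k) with h | h
  · have := hshort (ψ k) (τ k - ψ k) (by have := hτψ k; omega)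
    rw [Nat.add_sub_of_le h] at this
    rwa [min_eq_left h]
  · have := hshort (τ k) (ψ k - τ k) (by have := hψτ k; omega)
    rw [Nat.add_sub_of_le h, dist_comm] at this
    rwa [min_eq_right h]

section Convex

theorem le_of_convexOn_of_le_add_mul_sq {E : Type*} [NormedAddCommGroup E] [NormedSpace ℝ E]
    {G : E → ℝ} (hG : ConvexOn ℝ Set.univ G) {p : E} {c : ℝ}
    (hp : ∀ z, G p ≤ G z + c * ‖z - p‖ ^ 2) (z : E) : G p ≤ G z := by
  have hsegment : ∀ t ∈ Set.Ioc (0 : ℝ) 1, G p ≤ G z + t * (c * ‖z - p‖ ^ 2) := by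
    rintro t ⟨ht0, ht1⟩
    have hmin := hp ((1 - t) • p + t • z)
    have hconv := hG.2 (Set.mem_univ p) (Set.mem_univ z) (sub_nonneg.2 ht1) ht0.le (by ring)
    rw [show (1 - t) • p + t • z - p = t • (z - p) by module, norm_smul, mul_pow,
      Real.norm_eq_abs, sq_abs] at hmin
    simp only [smul_eq_mul] at hconv
    refine le_of_mul_le_mul_left ?_ ht0
    linarith
  have hlim : Tendsto (fun t : ℝ => G z + t * (c * ‖z - p‖ ^ 2)) (𝓝[>] 0) (𝓝 (G z)) := by
    have : Continuous fun t : ℝ => G z + t * (c * ‖z - p‖ ^ 2) := by fun_prop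
    simpa using (this.tendsto 0).mono_left nhdsWithin_le_nhds
  exact ge_of_tendsto hlim (mem_of_superset (Ioc_mem_nhdsGT one_pos) hsegment)

variable {E : Type*} [NormedAddCommGroup E] [InnerProductSpace ℝ E]

theorem convexOn_add_mul_inner {G : E → ℝ} (hG : ConvexOn ℝ Set.univ G) (c : ℝ) (g : E) :
    ConvexOn ℝ Set.univ fun z => G z + c * ⟪g, z⟫ :=
  hG.add ((c • innerₗ E g).convexOn convex_univ)

theorem prox_three_point {G : E → ℝ} (hG : ConvexOn ℝ Set.univ G) {r : ℝ} {x p : E}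
    (hp : ∀ z, G p + r * ‖p - x‖ ^ 2 ≤ G z + r * ‖z - x‖ ^ 2) (z : E) :
    G p + r * ‖p - x‖ ^ 2 + r * ‖p - z‖ ^ 2 ≤ G z + r * ‖x - z‖ ^ 2 := by
  have hexpand : ∀ z, ‖z - x‖ ^ 2 = ‖p - x‖ ^ 2 + 2 * (⟪p - x, z⟫ - ⟪p - x, p⟫) + ‖z - p‖ ^ 2 :=
    fun z => by
      rw [← inner_sub_right, ← norm_add_sq_real, sub_add_sub_cancel']
  have hvar := le_of_convexOn_of_le_add_mul_sq (convexOn_add_mul_inner hG (2 * r) (p - x))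
    (p := p) (c := r) (fun z => by linear_combination hp z + r * hexpand z) z
  rw [norm_sub_rev p z, norm_sub_rev x z]
  linear_combination hvar - r * hexpand z

end Convex

section Penalized

variable {ι E : Type*} [Fintype ι] [NormedAddCommGroup E]

/-- The weighted disagreement `∑ᵢⱼ wᵢⱼ ‖yᵢ - yⱼ‖²` of the nodes, in which every edge of the graph
is counted in both directions. -/
def disagreement (W : Matrix ι ι ℝ) (y : ι → E) : ℝ :=
  ∑ i, ∑ j, W i j * ‖y i - y j‖ ^ 2

/-- The penalized objective `Φ` of decentralized optimization: the local objectives `φ i` are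
evaluated at separate points and disagreement between nodes is penalized with parameter `α`. -/
noncomputable def penalizedObjective (φ : ι → E → ℝ) (W : Matrix ι ι ℝ) (α : ℝ) (y : ι → E) : ℝ :=
  ∑ i, φ i (y i) + 1 / (4 * α) * disagreement W y

theorem disagreement_nonneg {W : Matrix ι ι ℝ} (hW : ∀ i j, 0 ≤ W i j) (y : ι → E) :
    0 ≤ disagreement W y :=
  Finset.sum_nonneg fun i _ => Finset.sum_nonneg fun j _ => mul_nonneg (hW i j) (sq_nonneg _)

variable [InnerProductSpace ℝ E]

theorem disagreement_add {W : Matrix ι ι ℝ} (hW : W.IsSymm) (y v : ι → E) :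
    disagreement W (y + v) = disagreement W y + 4 * ∑ i, ⟪∑ j, W i j • (y i - y j), v i⟫
      + disagreement W v := by
  have hcross : ∑ i, ∑ j, W i j * ⟪y i - y j, v i - v j⟫ =
      2 * ∑ i, ⟪∑ j, W i j • (y i - y j), v i⟫ := by
    have hswap : ∑ i, ∑ j, W i j * ⟪y i - y j, v j⟫ = -∑ i, ∑ j, W i j * ⟪y i - y j, v i⟫ := by
      rw [Finset.sum_comm]
      simp only [← Finset.sum_neg_distrib, ← mul_neg, ← inner_neg_left, neg_sub, hW.apply]
    simp only [inner_sub_right, mul_sub, Finset.sum_sub_distrib, sum_inner, real_inner_smul_left,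
      hswap]
    ring
  have hterm : ∀ i j, W i j * ‖(y + v) i - (y + v) j‖ ^ 2 = W i j * ‖y i - y j‖ ^ 2
      + 2 * (W i j * ⟪y i - y j, v i - v j⟫) + W i j * ‖v i - v j‖ ^ 2 := fun i j => by
    rw [Pi.add_apply, Pi.add_apply, add_sub_add_comm, norm_add_sq_real]
    ring
  simp only [disagreement, hterm, Finset.sum_add_distrib, ← Finset.mul_sum, hcross]
  ring

theorem disagreement_single [DecidableEq ι] (W : Matrix ι ι ℝ) (i : ι) (v : E) :
    disagreement W (Pi.single i v) = disagreement W (Pi.single i (1 : ℝ)) * ‖v‖ ^ 2 := by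
  have hsmul : ∀ l, (Pi.single i v : ι → E) l = (Pi.single i (1 : ℝ) : ι → ℝ) l • v := fun l => by
    rcases eq_or_ne l i with rfl | hl <;> simp [*]
  simp only [disagreement, hsmul, ← sub_smul, norm_smul, mul_pow, Finset.sum_mul, mul_assoc]

theorem penalizedObjective_add_single [DecidableEq ι] (φ : ι → E → ℝ) {W : Matrix ι ι ℝ}
    (hW : W.IsSymm) (α : ℝ) (y : ι → E) (i : ι) (v : E) :
    penalizedObjective φ W α (y + Pi.single i v) = penalizedObjective φ W α y
      + (φ i (y i + v) - φ i (y i)) + 1 / α * ⟪∑ j, W i j • (y i - y j), v⟫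
      + 1 / (4 * α) * disagreement W (Pi.single i (1 : ℝ)) * ‖v‖ ^ 2 := by
  have hlocal : ∑ l, φ l ((y + Pi.single i v : ι → E) l) - ∑ l, φ l (y l) =
      φ i (y i + v) - φ i (y i) := by
    rw [← Finset.sum_sub_distrib, Fintype.sum_eq_single i fun l hl => by simp [hl]]
    simp
  have hinner : ∑ l, ⟪∑ j, W l j • (y l - y j), (Pi.single i v : ι → E) l⟫ =
      ⟪∑ j, W i j • (y i - y j), v⟫ := by
    rw [Fintype.sum_eq_single i fun l hl => by simp [hl], Pi.single_eq_same]
  rw [penalizedObjective, penalizedObjective, disagreement_add hW, disagreement_single, hinner,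
    show 1 / (4 * α) = 1 / α / 4 by rw [mul_comm, div_mul_eq_div_div]]
  linear_combination hlocal

theorem isMin_penalizedObjective_iff {φ : ι → E → ℝ} (hφ : ∀ i, ConvexOn ℝ Set.univ (φ i))
    {W : Matrix ι ι ℝ} (hW : W.IsSymm) (hW0 : ∀ i j, 0 ≤ W i j) {α : ℝ} (hα : 0 ≤ α) {y : ι → E} :
    (∀ z, penalizedObjective φ W α y ≤ penalizedObjective φ W α z) ↔
      ∀ i z, φ i (y i) ≤ φ i z + 1 / α * ⟪∑ j, W i j • (y i - y j), z - y i⟫ := by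
  classical
  refine ⟨fun hmin i z => ?_, fun hvar z => ?_⟩
  · have hcoord : ∀ z, φ i (y i) + 1 / α * ⟪∑ j, W i j • (y i - y j), y i⟫ ≤
        φ i z + 1 / α * ⟪∑ j, W i j • (y i - y j), z⟫
          + 1 / (4 * α) * disagreement W (Pi.single i (1 : ℝ)) * ‖z - y i‖ ^ 2 := fun z => by
      have := hmin (y + Pi.single i (z - y i))
      rw [penalizedObjective_add_single φ hW, add_sub_cancel, inner_sub_right] at this
      linear_combination this
    have := le_of_convexOn_of_le_add_mul_sq (convexOn_add_mul_inner (hφ i) _ _) hcoord z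
    rw [inner_sub_right]
    linear_combination this
  · have hsum := Finset.sum_le_sum fun i (_ : i ∈ Finset.univ) => hvar i (z i)
    rw [Finset.sum_add_distrib, ← Finset.mul_sum] at hsum
    have hexpand := disagreement_add hW y (z - y)
    rw [add_sub_cancel] at hexpand
    have hpen : 0 ≤ 1 / (4 * α) * disagreement W (z - y) :=
      mul_nonneg (by positivity) (disagreement_nonneg hW0 _)
    rw [penalizedObjective, penalizedObjective, hexpand]
    rw [show 1 / (4 * α) = 1 / α / 4 by rw [mul_comm, div_mul_eq_div_div]] at hpen ⊢
    simp only [Pi.sub_apply] at hsum hpen ⊢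
    linear_combination hsum + hpen

theorem inner_sum_smul_sub_ge {a : ι → ℝ} (ha : ∀ j, 0 ≤ a j) (e : ι → E) (i : ι) (v : E) :
    ∑ j, a j * (‖e i‖ ^ 2 - ‖e j‖ ^ 2) - (∑ j, a j - a i) * ‖v‖ ^ 2 ≤
      2 * ⟪∑ j, a j • (e i - e j), e i + v⟫ := by
  classical
  have hterm : ∀ j, -(a j * ‖v‖ ^ 2) ≤
      2 * (a j * ⟪e i - e j, e i + v⟫) - a j * (‖e i‖ ^ 2 - ‖e j‖ ^ 2) := fun j => by
    have hi : ‖v‖ ^ 2 = ‖e i‖ ^ 2 - 2 * ⟪e i, e i + v⟫ + ‖e i + v‖ ^ 2 := by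
      rw [← norm_sub_sq_real, sub_add_cancel_left, norm_neg]
    have hj : 0 ≤ ‖e j‖ ^ 2 - 2 * ⟪e j, e i + v⟫ + ‖e i + v‖ ^ 2 := by
      rw [← norm_sub_sq_real]
      positivity
    rw [inner_sub_left]
    linear_combination mul_nonneg (ha j) hj - a j * hi
  have hsum := Finset.sum_le_sum fun j (_ : j ∈ Finset.univ.erase i) => hterm j
  rw [Finset.sum_erase Finset.univ
    (f := fun j => 2 * (a j * ⟪e i - e j, e i + v⟫) - a j * (‖e i‖ ^ 2 - ‖e j‖ ^ 2)) (by simp),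
    Finset.sum_neg_distrib, ← Finset.sum_mul, Finset.sum_erase_eq_sub (Finset.mem_univ i),
    Finset.sum_sub_distrib, ← Finset.mul_sum] at hsum
  simp only [sum_inner, real_inner_smul_left]
  linear_combination hsum

end Penalized

/-- The mixing matrix `1 - diag(γ/α) L`, with `L` the Laplacian of the weighted graph `W`. -/
noncomputable def mixingMatrix {ι : Type*} [Fintype ι] [DecidableEq ι] (W : Matrix ι ι ℝ) (α : ℝ)
    (γ : ι → ℝ) : Matrix ι ι ℝ :=
  1 - Matrix.diagonal (fun i => γ i / α) * (Matrix.diagonal (fun i => ∑ j, W i j) - W)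

section MixingMatrix

variable {ι : Type*} [Fintype ι] [DecidableEq ι] (W : Matrix ι ι ℝ) (α : ℝ) (γ : ι → ℝ)

theorem sum_mixingMatrix_mul (t : ι → ℝ) (i : ι) :
    ∑ j, mixingMatrix W α γ i j * t j = t i - γ i / α * ∑ j, W i j * (t i - t j) := by
  simp only [mixingMatrix, Matrix.sub_apply, Matrix.diagonal_mul, Matrix.one_apply,
    Matrix.diagonal_apply, sub_mul, mul_sub, ite_mul, mul_ite, one_mul, zero_mul, mul_zero,
    mul_assoc, Finset.sum_sub_distrib, Finset.sum_ite_eq, Finset.mem_univ, if_true,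
    ← Finset.mul_sum, ← Finset.sum_mul]

theorem sum_mixingMatrix (i : ι) : ∑ j, mixingMatrix W α γ i j = 1 := by
  simpa using sum_mixingMatrix_mul W α γ (fun _ => 1) i

theorem mixingMatrix_apply_self (i : ι) :
    mixingMatrix W α γ i i = 1 - γ i / α * (∑ j, W i j - W i i) := by
  simp [mixingMatrix]

theorem mixingMatrix_apply_of_ne {i j : ι} (hij : i ≠ j) :
    mixingMatrix W α γ i j = γ i / α * W i j := by
  simp [mixingMatrix, hij]

end MixingMatrix

/-- A run of the asynchronous decentralized proximal bundle method. Node `i` has the objective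
`φ i`, replaced at an update time `k` by the convex model `q i k`, which minorizes `φ i` with error
at most `β i / 2 * ‖z - x k i‖ ^ 2`; the method updates by a proximal step with step-size `γ i` on
the model. In the paper's notation `φ i = f i + h i` and `q i k = m i k + h i`, and
`∑ j, W i j - W i i` is `1 - w_ii`. -/
structure AsyncDPBM {ι E : Type*} [Fintype ι] [NormedAddCommGroup E] [InnerProductSpace ℝ E]
    (W : Matrix ι ι ℝ) (α : ℝ) (φ : ι → E → ℝ) (β γ : ι → ℝ) (q : ι → ℕ → E → ℝ)
    (K : ι → Set ℕ) (s : ι → ι → ℕ → ℕ) (B D : ℕ) (x : ℕ → ι → E) : Prop where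
  weight_symm : W.IsSymm
  weight_nonneg : ∀ i j, 0 ≤ W i j
  connected : (SimpleGraph.fromRel fun i j => 0 < W i j).Connected
  penalty_pos : 0 < α
  convex : ∀ i, ConvexOn ℝ Set.univ (φ i)
  schedule : PartiallyAsynchronous K s B D
  convex_model : ∀ i, ∀ k ∈ K i, ConvexOn ℝ Set.univ (q i k)
  model_le : ∀ i, ∀ k ∈ K i, ∀ z, q i k z ≤ φ i z
  le_model : ∀ i, ∀ k ∈ K i, ∀ z, φ i z ≤ q i k z + β i / 2 * ‖z - x k i‖ ^ 2
  error_nonneg : ∀ i, 0 ≤ β i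
  step_pos : ∀ i, 0 < γ i
  step_lt : ∀ i, γ i < 1 / (β i + (∑ j, W i j - W i i) / α)
  update_le : ∀ i, ∀ k ∈ K i, ∀ z,
    q i k (x (k + 1) i) + ‖x (k + 1) i - x k i‖ ^ 2 / (2 * γ i)
        + 1 / α * ⟪∑ j, W i j • (x k i - x (s i j k) j), x (k + 1) i⟫
      ≤ q i k z + ‖z - x k i‖ ^ 2 / (2 * γ i)
        + 1 / α * ⟪∑ j, W i j • (x k i - x (s i j k) j), z⟫
  idle : ∀ i, ∀ k ∉ K i, x (k + 1) i = x k i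

namespace AsyncDPBM

variable {ι E : Type*} [Fintype ι] [NormedAddCommGroup E] [InnerProductSpace ℝ E]
  {W : Matrix ι ι ℝ} {α : ℝ} {φ : ι → E → ℝ} {β γ : ι → ℝ} {q : ι → ℕ → E → ℝ}
  {K : ι → Set ℕ} {s : ι → ι → ℕ → ℕ} {B D : ℕ} {x : ℕ → ι → E}

theorem descent_coeff_pos (H : AsyncDPBM W α φ β γ q K s B D x) (i : ι) :
    0 < 1 - γ i * (β i + (∑ j, W i j - W i i) / α) := by
  have hpos := one_div_pos.1 ((H.step_pos i).trans (H.step_lt i))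
  exact sub_pos.2 ((lt_div_iff₀ hpos).1 (H.step_lt i))

theorem prox_le (H : AsyncDPBM W α φ β γ q K s B D x) {i : ι} {k : ℕ} (hk : k ∈ K i) (z : E) :
    φ i (x (k + 1) i) + (1 / (2 * γ i) - β i / 2) * ‖x (k + 1) i - x k i‖ ^ 2
        + 1 / α * ⟪∑ j, W i j • (x k i - x (s i j k) j), x (k + 1) i - z⟫
        + 1 / (2 * γ i) * ‖x (k + 1) i - z‖ ^ 2
      ≤ φ i z + 1 / (2 * γ i) * ‖x k i - z‖ ^ 2 := by
  have hprox := prox_three_point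
    (convexOn_add_mul_inner (H.convex_model i k hk) (1 / α) (∑ j, W i j • (x k i - x (s i j k) j)))
    (r := 1 / (2 * γ i)) (x := x k i) (p := x (k + 1) i)
    (fun z => by linear_combination H.update_le i k hk z) z
  rw [inner_sub_right]
  linear_combination hprox + H.model_le i k hk z + H.le_model i k hk (x (k + 1) i)

theorem descent [DecidableEq ι] (H : AsyncDPBM W α φ β γ q K s B D x) {y : ι → E}
    (hy : ∀ z, penalizedObjective φ W α y ≤ penalizedObjective φ W α z) {i : ι} {k : ℕ}
    (hk : k ∈ K i) :
    (1 - γ i * (β i + (∑ j, W i j - W i i) / α)) * ‖x (k + 1) i - x k i‖ ^ 2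
        + ‖x (k + 1) i - y i‖ ^ 2
      ≤ ∑ j, mixingMatrix W α γ i j * ‖x (s i j k) j - y j‖ ^ 2 := by
  have hopt := (isMin_penalizedObjective_iff H.convex H.weight_symm H.weight_nonneg
    H.penalty_pos.le).1 hy i (x (k + 1) i)
  have hprox := H.prox_le hk (y i)
  have hself := H.schedule.self_delay i k hk
  have hinner := inner_sum_smul_sub_ge (H.weight_nonneg i) (fun j => x (s i j k) j - y j) i
    (x (k + 1) i - x k i)
  have hsplit : ∑ j, W i j • (x k i - x (s i j k) j) - ∑ j, W i j • (y i - y j) =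
      ∑ j, W i j • (x k i - y i - (x (s i j k) j - y j)) := by
    simp only [← Finset.sum_sub_distrib, ← smul_sub, sub_sub_sub_comm]
  rw [hself, add_comm (x k i - y i), sub_add_sub_cancel, ← hsplit, inner_sub_left] at hinner
  rw [sum_mixingMatrix_mul, hself]
  have hα := H.penalty_pos
  have hγ := H.step_pos i
  have hscaled := mul_le_mul_of_nonneg_left (add_le_add hprox hopt) (by positivity : 0 ≤ 2 * γ i)
  field_simp at hscaled ⊢
  linear_combination hscaled + γ i * hinner

theorem asyncSubaveraging [DecidableEq ι] (H : AsyncDPBM W α φ β γ q K s B D x) {y : ι → E}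
    (hy : ∀ z, penalizedObjective φ W α y ≤ penalizedObjective φ W α z) :
    AsyncSubaveraging (mixingMatrix W α γ) K s fun k i => ‖x k i - y i‖ ^ 2 := by
  have hdiag : ∀ i, 0 < mixingMatrix W α γ i i := fun i => by
    rw [mixingMatrix_apply_self]
    linear_combination H.descent_coeff_pos i + mul_nonneg (H.step_pos i).le (H.error_nonneg i)
  refine ⟨fun i j => ?_, sum_mixingMatrix W α γ, hdiag, fun i k hk => ?_, fun i k hk => ?_⟩
  · rcases eq_or_ne i j with rfl | hij
    · exact (hdiag i).le
    · rw [mixingMatrix_apply_of_ne W α γ hij]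
      exact mul_nonneg (div_pos (H.step_pos i) H.penalty_pos).le (H.weight_nonneg i j)
  · have hnonneg := mul_nonneg (H.descent_coeff_pos i).le (sq_nonneg ‖x (k + 1) i - x k i‖)
    exact (le_add_of_nonneg_left hnonneg).trans (H.descent hy hk)
  · rw [H.idle i k hk]

theorem reflTransGen_mixingMatrix [DecidableEq ι] (H : AsyncDPBM W α φ β γ q K s B D x)
    (i j : ι) : Relation.ReflTransGen (fun i j => 0 < mixingMatrix W α γ j i) i j := by
  refine Relation.ReflTransGen.mono (fun a b hab => ?_) _ _
    ((SimpleGraph.reachable_iff_reflTransGen i j).1 (H.connected.preconnected i j))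
  obtain ⟨hne, hW⟩ := (SimpleGraph.fromRel_adj _ _ _).1 hab
  rw [H.weight_symm.apply, or_self] at hW
  rw [mixingMatrix_apply_of_ne W α γ hne.symm]
  exact mul_pos (div_pos (H.step_pos b) H.penalty_pos) hW

theorem exists_tendsto_sq_norm_sub (H : AsyncDPBM W α φ β γ q K s B D x) {y : ι → E}
    (hy : ∀ z, penalizedObjective φ W α y ≤ penalizedObjective φ W α z) :
    ∃ V, ∀ i, Tendsto (fun k => ‖x k i - y i‖ ^ 2) atTop (𝓝 V) := by
  classical
  have := H.connected.nonempty
  exact (H.asyncSubaveraging hy).exists_tendsto H.schedule H.reflTransGen_mixingMatrix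
    fun k i => sq_nonneg _

theorem tendsto_dist_succ (H : AsyncDPBM W α φ β γ q K s B D x) {y : ι → E}
    (hy : ∀ z, penalizedObjective φ W α y ≤ penalizedObjective φ W α z) (i : ι) :
    Tendsto (fun k => dist (x k i) (x (k + 1) i)) atTop (𝓝 0) := by
  classical
  obtain ⟨V, hV⟩ := H.exists_tendsto_sq_norm_sub hy
  have hδ := H.descent_coeff_pos i
  have hslack := tendsto_zero_of_add_le_average (sum_mixingMatrix W α γ i)
    (H.schedule.tendsto_delay i) hV (fun k => mul_nonneg hδ.le (sq_nonneg ‖x (k + 1) i - x k i‖)) i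
    (fun k => H.descent hy) fun k hk => by simp [H.idle i k hk]
  have hsq := hslack.const_mul (1 - γ i * (β i + (∑ j, W i j - W i i) / α))⁻¹
  simp only [inv_mul_cancel_left₀ hδ.ne', mul_zero] at hsq
  simpa [dist_eq_norm, norm_sub_rev] using hsq.sqrt

theorem isBounded_range (H : AsyncDPBM W α φ β γ q K s B D x) {y : ι → E}
    (hy : ∀ z, penalizedObjective φ W α y ≤ penalizedObjective φ W α z) :
    Bornology.IsBounded (Set.range x) := by
  obtain ⟨V, hV⟩ := H.exists_tendsto_sq_norm_sub hy
  rw [← Bornology.forall_isBounded_image_eval_iff]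
  intro i
  obtain ⟨R, hR⟩ := (hV i).bddAbove_range
  refine (Metric.isBounded_closedBall (x := y i) (r := √R)).subset ?_
  rintro _ ⟨_, ⟨k, rfl⟩, rfl⟩
  exact mem_closedBall_iff_norm.2 (Real.le_sqrt_of_sq_le (hR ⟨k, rfl⟩))

theorem isMin_of_tendsto_comp [FiniteDimensional ℝ E] (H : AsyncDPBM W α φ β γ q K s B D x)
    (hx : ∀ i, Tendsto (fun k => dist (x k i) (x (k + 1) i)) atTop (𝓝 0)) {ψ : ℕ → ℕ}
    (hψ : Tendsto ψ atTop atTop) {xt : ι → E} (hxt : Tendsto (fun k => x (ψ k)) atTop (𝓝 xt)) :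
    ∀ z, penalizedObjective φ W α xt ≤ penalizedObjective φ W α z := by
  rw [isMin_penalizedObjective_iff H.convex H.weight_symm H.weight_nonneg H.penalty_pos.le]
  intro i z
  choose τ hτK hτ_ge hτ_le using fun k => H.schedule.exists_update i (ψ k)
  have hread_ge := fun j k => H.schedule.le_delay i j (τ k) (hτK k)
  have hread_le := fun j k => H.schedule.delay_le i j (τ k) (hτK k)
  have hlim : ∀ j (τ' : ℕ → ℕ), (∀ k, ψ k ≤ τ' k + (B + D + 1)) →
      (∀ k, τ' k ≤ ψ k + (B + D + 1)) → Tendsto (fun k => x (τ' k) j) atTop (𝓝 (xt j)) :=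
    fun j τ' h₁ h₂ => tendsto_comp_of_bounded_offset (hx j) hψ h₁ h₂ (tendsto_pi_nhds.1 hxt j)
  have hold : Tendsto (fun k => x (τ k) i) atTop (𝓝 (xt i)) :=
    hlim i τ (fun k => by grind) fun k => by grind
  have hnew : Tendsto (fun k => x (τ k + 1) i) atTop (𝓝 (xt i)) :=
    hlim i (fun k => τ k + 1) (fun k => by grind) fun k => by grind
  have hread : ∀ j, Tendsto (fun k => x (s i j (τ k)) j) atTop (𝓝 (xt j)) := fun j =>
    hlim j (fun k => s i j (τ k)) (fun k => by grind) fun k => by grind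
  have hφ : Tendsto (fun k => φ i (x (τ k + 1) i)) atTop (𝓝 (φ i (xt i))) :=
    ((continuousOn_univ.1 ((H.convex i).continuousOn isOpen_univ)).tendsto _).comp hnew
  have hgrad : Tendsto (fun k => ∑ j, W i j • (x (τ k) i - x (s i j (τ k)) j)) atTop
      (𝓝 (∑ j, W i j • (xt i - xt j))) :=
    tendsto_finsetSum _ fun j _ => (hold.sub (hread j)).const_smul (W i j)
  have hleft := ((hφ.add (((hnew.sub hold).norm.pow 2).const_mul (1 / (2 * γ i) - β i / 2))).add
    ((hgrad.inner (𝕜 := ℝ) (hnew.sub_const z)).const_mul (1 / α))).add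
    (((hnew.sub_const z).norm.pow 2).const_mul (1 / (2 * γ i)))
  have hright := (((hold.sub_const z).norm.pow 2).const_mul (1 / (2 * γ i))).const_add (φ i z)
  have hle := le_of_tendsto_of_tendsto' hleft hright fun k => H.prox_le (hτK k) z
  rw [sub_self, norm_zero] at hle
  rw [← neg_sub (xt i) z, inner_neg_right]
  linear_combination hle

end AsyncDPBM

theorem stmt_7_general {ι E : Type*} [Fintype ι] [NormedAddCommGroup E] [InnerProductSpace ℝ E]
    [FiniteDimensional ℝ E] {W : Matrix ι ι ℝ} {α : ℝ} {φ : ι → E → ℝ} {β γ : ι → ℝ}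
    {q : ι → ℕ → E → ℝ} {K : ι → Set ℕ} {s : ι → ι → ℕ → ℕ} {B D : ℕ} {x : ℕ → ι → E}
    (H : AsyncDPBM W α φ β γ q K s B D x) {xstar : ι → E}
    (hxstar : ∀ y, penalizedObjective φ W α xstar ≤ penalizedObjective φ W α y) :
    ∃ xt, Tendsto x atTop (𝓝 xt) ∧
      ∀ y, penalizedObjective φ W α xt ≤ penalizedObjective φ W α y := by
  obtain ⟨xt, -, ψ, hψ, hxt⟩ :=
    tendsto_subseq_of_bounded (H.isBounded_range hxstar) fun k => Set.mem_range_self k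
  have hmin := H.isMin_of_tendsto_comp (H.tendsto_dist_succ hxstar) hψ.tendsto_atTop hxt
  obtain ⟨V, hV⟩ := H.exists_tendsto_sq_norm_sub hmin
  refine ⟨xt, tendsto_pi_nhds.2 fun i => ?_, hmin⟩
  have hsub : Tendsto (fun k => ‖x (ψ k) i - xt i‖ ^ 2) atTop (𝓝 0) := by
    simpa using ((tendsto_pi_nhds.1 hxt i).sub_const (xt i)).norm.pow 2
  obtain rfl : V = 0 := tendsto_nhds_unique ((hV i).comp hψ.tendsto_atTop) hsub
  simpa [tendsto_iff_norm_sub_tendsto_zero] using (hV i).sqrt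

end

/-- Theorem 1, part 1 (convergence without strong convexity): under partial
asynchrony the joint iterate sequence of asynchronous DPBM converges to a
global minimizer of the penalized objective.
The `n + 1` nodes are indexed by `Fin (n + 1)` (so there is at least one node). -/
theorem stmt_7 {d n : ℕ} (hd : 1 ≤ d)
    -- averaging matrix
    (W : Matrix (Fin (n + 1)) (Fin (n + 1)) ℝ)
    (hWsymm : W.IsSymm)
    (hWnonneg : ∀ i j, 0 ≤ W i j)
    (hWrow : ∀ i, ∑ j, W i j = 1)
    (hWdiag : ∀ i, 0 < W i i)
    (hconn : (SimpleGraph.fromRel (fun i j : Fin (n + 1) => 0 < W i j)).Connected)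
    -- local objective functions
    (f h : Fin (n + 1) → EuclideanSpace ℝ (Fin d) → ℝ)
    (hfconv : ∀ i, ConvexOn ℝ Set.univ (f i))
    (hfdiff : ∀ i, Differentiable ℝ (f i))
    (hhconv : ∀ i, ConvexOn ℝ Set.univ (h i))
    -- penalized objective and its minimizer
    (α : ℝ) (hα : 0 < α)
    (Φ : (Fin (n + 1) → EuclideanSpace ℝ (Fin d)) → ℝ)
    (hΦ : ∀ x, Φ x = (∑ i, (f i (x i) + h i (x i)))
        + (1 / (4 * α)) * ∑ i, ∑ j, W i j * ‖x i - x j‖ ^ 2)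
    (xstar : Fin (n + 1) → EuclideanSpace ℝ (Fin d))
    (hxstar : ∀ y, Φ xstar ≤ Φ y)
    -- update times and delayed indices
    (K : Fin (n + 1) → Set ℕ)
    (s : Fin (n + 1) → Fin (n + 1) → ℕ → ℕ)
    (hsii : ∀ i, ∀ k ∈ K i, s i i k = k)
    (hsle : ∀ i j, ∀ k ∈ K i, s i j k ≤ k)
    -- iterates and models
    (x : ℕ → Fin (n + 1) → EuclideanSpace ℝ (Fin d))
    (β : Fin (n + 1) → ℝ) (hβ : ∀ i, 0 ≤ β i)
    (m : Fin (n + 1) → ℕ → EuclideanSpace ℝ (Fin d) → ℝ)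
    (hmconv : ∀ i, ∀ k ∈ K i, ConvexOn ℝ Set.univ (m i k))
    (hmle : ∀ i, ∀ k ∈ K i, ∀ y, m i k y ≤ f i y)
    (hmge : ∀ i, ∀ k ∈ K i, ∀ y, f i y ≤ m i k y + β i / 2 * ‖y - x k i‖ ^ 2)
    -- step-sizes
    (γ : Fin (n + 1) → ℝ)
    (hγpos : ∀ i, 0 < γ i)
    (hγlt : ∀ i, γ i < 1 / (β i + (1 - W i i) / α))
    -- the algorithm update
    (hupdate : ∀ i, ∀ k ∈ K i, ∀ z,
      m i k (x (k + 1) i) + h i (x (k + 1) i)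
          + ‖x (k + 1) i - x k i‖ ^ 2 / (2 * γ i)
          + (1 / α) * ⟪∑ j, W i j • (x k i - x (s i j k) j), x (k + 1) i⟫
        ≤ m i k z + h i z + ‖z - x k i‖ ^ 2 / (2 * γ i)
          + (1 / α) * ⟪∑ j, W i j • (x k i - x (s i j k) j), z⟫)
    (hnoupdate : ∀ i, ∀ k, k ∉ K i → x (k + 1) i = x k i)
    -- partial asynchrony
    (B D : ℕ)
    (hB : ∀ i, ∀ k : ℕ, ∃ l ∈ K i, k ≤ l ∧ l ≤ k + B)
    (hD : ∀ i j, ∀ k ∈ K i, k - D ≤ s i j k) :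
    ∃ xt : Fin (n + 1) → EuclideanSpace ℝ (Fin d),
      Filter.Tendsto x Filter.atTop (nhds xt) ∧ ∀ y, Φ xt ≤ Φ y := by
  obtain rfl : Φ = penalizedObjective (fun i z => f i z + h i z) W α := funext hΦ
  exact stmt_7_general (β := β) (γ := γ) (q := fun i k z => m i k z + h i z)
    { weight_symm := hWsymm
      weight_nonneg := hWnonneg
      connected := hconn
      penalty_pos := hα
      convex := fun i => (hfconv i).add (hhconv i)
      schedule := ⟨hsii, hsle, hD, hB⟩
      convex_model := fun i k hk => (hmconv i k hk).add (hhconv i)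
      model_le := fun i k hk z => add_le_add_left (hmle i k hk z) (h i z)
      le_model := fun i k hk z => by linear_combination hmge i k hk z
      error_nonneg := hβ
      step_pos := hγpos
      step_lt := by simpa only [hWrow] using hγlt
      update_le := hupdate
      idle := hnoupdate } hxstar
end
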